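/- Suppose the semigroup kernels T_t satisfy the gradient bound ∫_{ℝ^d} |∂_{x_j} T_t(x,z)| dx ≤ C₁ t^{-1/2} for all t > 0 and z, together with the semigroup property T_t(x,y) = ∫ T_{t-s}(x,z) T_s(z,y) dz and condition (D) for a cube Q of diameter ℓ. Then ∫_{ℝ^d} ∫_{ℓ²}^∞ |∂_{x_j} T_t(x,y)| t^{-1/2} dt dx ≤ C for all y ∈ Q*, with C depending only on C₁ and the constants in (D). -/

import Mathlib

/-!
# Large-time gradient estimate

Fix `y` and write `u t = T t · y`. The semigroup law and the Gaussian upper bound give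
`u (t + h) ≤ heatKernel d h * u t` (convolution in space), so `u` decays at least as fast as a
solution of the heat equation (`IsSubHeatFlow`). This, the Gaussian upper bound and the decay of
the masses `∫ u t` already imply the estimate, through the dissipation of `φ t = ∫ (u t) ^ (1 + δ)`.

In one averaging step of length `h = r ^ 2`, the decrease `φ t - φ (t + h)` is at least the midpoint
convexity defect of `s ↦ s ^ (1 + δ)` at the two values `u t (x - r w)` and `u t (x - r w')`, where
`w` is Gaussian and `w'` is its reflection in the `j`-th coordinate. This defect is at least a
multiple of `(a - b) ^ 2 / (a ^ (1 - δ) + b ^ (1 - δ))` (`convexity_defect_lower`), so by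
Cauchy-Schwarz the mean of `|u t (x - r w) - u t (x - r w')|` is at most a constant times
`((φ t - φ (t + h)) * ∫ (u t) ^ (1 - δ)) ^ (1 / 2)` (`oscillation_le`). Dividing by `r` and letting
`r → 0`, Fatou's lemma turns the left-hand side into `∫ |∂ⱼ u t|` (`gradient_le_liminf`). Integrated
over `t ∈ (a, 2 a]`, the difference quotients `(φ t - φ (t + h)) / h` contribute at most `φ a`, and
Cauchy-Schwarz in time yields
`∫ₐ²ᵃ ∫ |∂ⱼ u t| ≤ C * a ^ (1 / 2) * (∫ u a) ^ (1 - δ)` (`exists_dyadic_gradient_bound`);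
the powers of `a` coming from `∫ (u t) ^ (1 ± δ)` cancel.

Finally, with `a = 2 ^ n * ℓ ^ 2` the weight `t ^ (-1 / 2)` absorbs `a ^ (1 / 2)`, and condition (D)
bounds the sum over `n ≥ 1` by a multiple of `∑ n ^ (-(1 + ε) * (1 - δ))`, which converges for `δ`
small; on the block `n = 0` the mass is at most `1`.
-/

open MeasureTheory Real Set

noncomputable def heatKernel (d : ℕ) (t : ℝ) (x : EuclideanSpace ℝ (Fin d)) : ℝ :=
  (4 * Real.pi * t) ^ (-(d : ℝ) / 2) * Real.exp (-‖x‖ ^ 2 / (4 * t))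

/-! ### Convexity defect of a power -/

/-- Quantitative midpoint convexity of `s ↦ s ^ (1 + δ)`. It follows from the lower bound
`δ (1 + δ) max(a, b) ^ (δ - 1)` for the second derivative on `[0, max(a, b)]`. -/
lemma convexity_defect_lower {δ a b : ℝ} (hδ : 0 < δ) (hδ1 : δ < 1) (ha : 0 ≤ a) (hb : 0 ≤ b) :
    δ * (1 + δ) / 8 * (a - b) ^ 2 ≤
      ((a ^ (1 + δ) + b ^ (1 + δ)) / 2 - ((a + b) / 2) ^ (1 + δ)) *
        (a ^ (1 - δ) + b ^ (1 - δ)) := by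
  wlog hab : b ≤ a generalizing a b
  · have := this hb ha (le_of_not_ge hab)
    rw [add_comm b a, add_comm (b ^ (1 + δ)), add_comm (b ^ (1 - δ))] at this
    nlinarith [this]
  rcases ha.eq_or_lt with rfl | ha0
  · have : b = 0 := le_antisymm hab hb
    subst this
    have : (0 : ℝ) ^ (1 + δ) = 0 := Real.zero_rpow (by linarith)
    simp [this]
  set k : ℝ := (1 + δ) * δ / 2 * a ^ (δ - 1) with hk
  -- `s ^ (1 + δ) - k * s ^ 2` is convex on `[0, a]`, as `s ^ (δ - 1) ≥ a ^ (δ - 1)` there.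
  have hconv : ConvexOn ℝ (Icc 0 a) (fun s : ℝ => s ^ (1 + δ) - k * s ^ 2) := by
    refine convexOn_of_hasDerivWithinAt2_nonneg (convex_Icc 0 a)
      (f' := fun s => (1 + δ) * s ^ δ - k * (2 * s))
      (f'' := fun s => (1 + δ) * (δ * s ^ (δ - 1)) - k * 2) ?_ ?_ ?_ ?_
    · refine ContinuousOn.sub (fun s _ => ?_) (by fun_prop)
      exact (Real.continuousAt_rpow_const _ _ (Or.inr (by linarith))).continuousWithinAt
    · intro s hs
      rw [interior_Icc] at hs
      have h1 := (Real.hasDerivAt_rpow_const (x := s) (p := 1 + δ) (Or.inl hs.1.ne'))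
      rw [show 1 + δ - 1 = δ by ring] at h1
      have h2 := ((hasDerivAt_pow 2 s).const_mul k)
      exact ((h1.sub h2).congr_deriv (by norm_num)).hasDerivWithinAt
    · intro s hs
      rw [interior_Icc] at hs
      have h1 := (Real.hasDerivAt_rpow_const (x := s) (p := δ) (Or.inl hs.1.ne'))
      have h2 := (((hasDerivAt_id s).const_mul 2).const_mul k)
      exact (((h1.const_mul (1 + δ)).sub h2).congr_deriv (by norm_num)).hasDerivWithinAt
    · intro s hs
      rw [interior_Icc] at hs
      have := Real.rpow_le_rpow_of_nonpos hs.1 hs.2.le (show δ - 1 ≤ 0 by linarith)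
      have h3 := mul_le_mul_of_nonneg_left this (show 0 ≤ (1 + δ) * δ by positivity)
      rw [hk]; linarith
  have hmid := hconv.2 (show a ∈ Icc 0 a from ⟨ha, le_rfl⟩) (show b ∈ Icc 0 a from ⟨hb, hab⟩)
    (show (0 : ℝ) ≤ 1 / 2 by norm_num) (show (0 : ℝ) ≤ 1 / 2 by norm_num) (by norm_num)
  simp only [smul_eq_mul] at hmid
  rw [show 1 / 2 * a + 1 / 2 * b = (a + b) / 2 by ring] at hmid
  have hdef : k / 4 * (a - b) ^ 2 ≤
      (a ^ (1 + δ) + b ^ (1 + δ)) / 2 - ((a + b) / 2) ^ (1 + δ) := by nlinarith [hmid]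
  have hk0 : 0 ≤ k := by positivity
  have hone : a ^ (δ - 1) * a ^ (1 - δ) = 1 := by
    rw [← Real.rpow_add ha0]; simp
  calc δ * (1 + δ) / 8 * (a - b) ^ 2 = k / 4 * (a - b) ^ 2 * a ^ (1 - δ) := by
        rw [hk]; linear_combination (-(δ * (1 + δ) / 8 * (a - b) ^ 2)) * hone
    _ ≤ _ := by
        refine mul_le_mul hdef ?_ (by positivity) (le_trans (by positivity) hdef)
        linarith [Real.rpow_nonneg hb (1 - δ)]

/-! ### Heat kernels and Gaussian averages -/

lemma lintegral_gaussian_exp (d : ℕ) {b : ℝ} (hb : 0 < b) :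
    ∫⁻ x : EuclideanSpace ℝ (Fin d), ENNReal.ofReal (Real.exp (-b * ‖x‖ ^ 2)) =
      ENNReal.ofReal ((π / b) ^ ((d : ℝ) / 2)) := by
  have h := GaussianFourier.integral_rexp_neg_mul_sq_norm
    (V := EuclideanSpace ℝ (Fin d)) hb
  have hpos : 0 < (π / b) ^ ((d : ℝ) / 2) := by positivity
  rw [finrank_euclideanSpace_fin] at h
  rw [← h, ofReal_integral_eq_lintegral_ofReal]
  · by_contra hni
    rw [integral_undef hni] at h
    exact hpos.ne h
  · exact ae_of_all _ fun x => (Real.exp_pos _).le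

lemma continuous_heatKernel (d : ℕ) (t : ℝ) : Continuous (heatKernel d t) := by
  unfold heatKernel; fun_prop

lemma heatKernel_nonneg (d : ℕ) {t : ℝ} (ht : 0 < t) (x : EuclideanSpace ℝ (Fin d)) :
    0 ≤ heatKernel d t x := by
  unfold heatKernel; positivity

lemma heatKernel_le (d : ℕ) {t : ℝ} (ht : 0 < t) (x : EuclideanSpace ℝ (Fin d)) :
    heatKernel d t x ≤ (4 * π * t) ^ (-(d : ℝ) / 2) := by
  unfold heatKernel
  refine mul_le_of_le_one_right (by positivity) (Real.exp_le_one_iff.2 ?_)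
  rw [neg_div]
  exact neg_nonpos.2 (by positivity)

lemma lintegral_heatKernel (d : ℕ) {t : ℝ} (ht : 0 < t) :
    ∫⁻ x, ENNReal.ofReal (heatKernel d t x) = 1 := by
  have h := lintegral_gaussian_exp d (b := 1 / (4 * t)) (by positivity)
  have hc : 0 ≤ (4 * π * t) ^ (-(d : ℝ) / 2) := by positivity
  have : ∀ x : EuclideanSpace ℝ (Fin d), ENNReal.ofReal (heatKernel d t x) =
      ENNReal.ofReal ((4 * π * t) ^ (-(d : ℝ) / 2)) *
        ENNReal.ofReal (Real.exp (-(1 / (4 * t)) * ‖x‖ ^ 2)) := by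
    intro x
    rw [← ENNReal.ofReal_mul hc, heatKernel]
    congr 3; ring
  simp_rw [this]
  rw [lintegral_const_mul _ (by fun_prop), h, ← ENNReal.ofReal_mul hc,
    show π / (1 / (4 * t)) = 4 * π * t by field_simp, ← Real.rpow_add (by positivity)]
  simp [neg_div]

lemma lintegral_sqrt_heatKernel (d : ℕ) {t : ℝ} (ht : 0 < t) :
    ∫⁻ x, ENNReal.ofReal (heatKernel d t x) ^ (1 / 2 : ℝ) =
      ENNReal.ofReal ((16 * π * t) ^ ((d : ℝ) / 4)) := by
  have h := lintegral_gaussian_exp d (b := 1 / (8 * t)) (by positivity)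
  have hc : 0 ≤ (4 * π * t) ^ (-(d : ℝ) / 4) := by positivity
  have : ∀ x : EuclideanSpace ℝ (Fin d), ENNReal.ofReal (heatKernel d t x) ^ (1 / 2 : ℝ) =
      ENNReal.ofReal ((4 * π * t) ^ (-(d : ℝ) / 4)) *
        ENNReal.ofReal (Real.exp (-(1 / (8 * t)) * ‖x‖ ^ 2)) := by
    intro x
    rw [ENNReal.ofReal_rpow_of_nonneg (heatKernel_nonneg d ht x) (by norm_num),
      ← ENNReal.ofReal_mul hc, heatKernel, Real.mul_rpow (by positivity) (by positivity),
      ← Real.rpow_mul (by positivity), ← Real.exp_mul]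
    congr 3
    · ring
    · field_simp; ring
  simp_rw [this]
  rw [lintegral_const_mul _ (by fun_prop), h, ← ENNReal.ofReal_mul hc]
  congr 1
  have e1 : π / (1 / (8 * t)) = (4 * π * t) ^ (1 / 2 : ℝ) * (16 * π * t) ^ (1 / 2 : ℝ) := by
    rw [← Real.mul_rpow (by positivity) (by positivity), ← Real.sqrt_eq_rpow,
      show 4 * π * t * (16 * π * t) = (8 * π * t) ^ 2 by ring, Real.sqrt_sq (by positivity)]
    field_simp
  rw [e1, Real.mul_rpow (x := (4 * π * t) ^ (1 / 2 : ℝ)) (by positivity) (by positivity),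
    ← Real.rpow_mul (by positivity),
    ← Real.rpow_mul (by positivity), ← mul_assoc, ← Real.rpow_add (by positivity),
    show -(d : ℝ) / 4 + 1 / 2 * (d / 2) = 0 by ring, Real.rpow_zero, one_mul]
  congr 1; ring

/-- The law of `√2` times a standard Gaussian vector: the measure with density `heatKernel d 1`. -/
noncomputable def gaussMeasure (d : ℕ) : Measure (EuclideanSpace ℝ (Fin d)) :=
  volume.withDensity fun w => ENNReal.ofReal (heatKernel d 1 w)

instance (d : ℕ) : IsProbabilityMeasure (gaussMeasure d) :=
  ⟨by rw [gaussMeasure, withDensity_apply _ MeasurableSet.univ, setLIntegral_univ,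
    lintegral_heatKernel d one_pos]⟩

lemma lintegral_gaussMeasure (d : ℕ) {g : EuclideanSpace ℝ (Fin d) → ENNReal}
    (hg : Measurable g) :
    ∫⁻ w, g w ∂gaussMeasure d = ∫⁻ w, ENNReal.ofReal (heatKernel d 1 w) * g w := by
  rw [gaussMeasure, lintegral_withDensity_eq_lintegral_mul _
    (continuous_heatKernel d 1).measurable.ennreal_ofReal hg]
  rfl

lemma lintegral_gaussMeasure_comp_isometry (d : ℕ)
    (R : EuclideanSpace ℝ (Fin d) ≃ₗᵢ[ℝ] EuclideanSpace ℝ (Fin d))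
    {g : EuclideanSpace ℝ (Fin d) → ENNReal} (hg : Measurable g) :
    ∫⁻ w, g (R w) ∂gaussMeasure d = ∫⁻ w, g w ∂gaussMeasure d := by
  have hm := (continuous_heatKernel d 1).measurable.ennreal_ofReal
  rw [lintegral_gaussMeasure d (g := fun w => g (R w)) (hg.comp R.continuous.measurable),
    lintegral_gaussMeasure d hg,
    ← R.measurePreserving.lintegral_comp
      (f := fun w => ENNReal.ofReal (heatKernel d 1 w) * g w) (hm.mul hg)]
  simp [heatKernel]

/-- Convolution with the heat kernel at time `r ^ 2` is averaging over Gaussian shifts of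
size `r`. -/
lemma lintegral_heatKernel_conv (d : ℕ) {r : ℝ} (hr : 0 < r) (x : EuclideanSpace ℝ (Fin d))
    {g : EuclideanSpace ℝ (Fin d) → ENNReal} (hg : Measurable g) :
    ∫⁻ z, ENNReal.ofReal (heatKernel d (r ^ 2) (x - z)) * g z =
      ∫⁻ w, g (x - r • w) ∂gaussMeasure d := by
  have hm := (continuous_heatKernel d (r ^ 2)).measurable.ennreal_ofReal
  have hmg : Measurable fun z => g (x - z) := hg.comp (measurable_const.sub measurable_id)
  rw [lintegral_gaussMeasure d (by fun_prop),
    ← lintegral_sub_left_eq_self _ x]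
  simp only [sub_sub_cancel]
  have hmap := Measure.map_addHaar_smul (volume : Measure (EuclideanSpace ℝ (Fin d))) hr.ne'
  have key : ∫⁻ z, ENNReal.ofReal (heatKernel d (r ^ 2) z) * g (x - z)
      ∂(Measure.map (fun w => r • w) (volume : Measure (EuclideanSpace ℝ (Fin d)))) =
      ∫⁻ w, ENNReal.ofReal (heatKernel d (r ^ 2) (r • w)) * g (x - r • w) :=
    lintegral_map (hm.mul hmg) (by fun_prop)
  rw [hmap, lintegral_smul_measure, finrank_euclideanSpace_fin] at key
  have hrd : 0 < r ^ d := by positivity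
  have hscale : ∀ w : EuclideanSpace ℝ (Fin d), ENNReal.ofReal (heatKernel d (r ^ 2) (r • w)) =
      ENNReal.ofReal |(r ^ d)⁻¹| * ENNReal.ofReal (heatKernel d 1 w) := by
    intro w
    rw [abs_of_pos (by positivity), ← ENNReal.ofReal_mul (by positivity)]
    congr 1
    rw [heatKernel, heatKernel, norm_smul, Real.norm_of_nonneg hr.le, ← mul_assoc]
    congr 1
    · rw [Real.mul_rpow (by positivity) (by positivity), mul_one, mul_comm,
        ← Real.rpow_natCast r 2, ← Real.rpow_mul hr.le, ← Real.rpow_natCast r d,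
        ← Real.rpow_neg hr.le]
      congr 2; push_cast; ring
    · congr 1; field_simp
  simp_rw [hscale, mul_assoc] at key
  rw [lintegral_const_mul' _ _ ENNReal.ofReal_ne_top] at key
  refine (ENNReal.mul_right_inj ?_ ENNReal.ofReal_ne_top).1 key
  simp [hr.ne', abs_pos]

/-! ### Averaging and oscillation -/

/-- Jensen's inequality for `s ↦ s ^ p` on a probability space. -/
lemma rpow_lintegral_le {α : Type*} [MeasurableSpace α] {μ : Measure α} [IsProbabilityMeasure μ]
    {f : α → ENNReal} (hf : AEMeasurable f μ) {p : ℝ} (hp : 1 ≤ p) :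
    (∫⁻ a, f a ∂μ) ^ p ≤ ∫⁻ a, f a ^ p ∂μ := by
  have hp0 : 0 < p := by linarith
  have h := ENNReal.lintegral_mul_norm_pow_le (μ := μ) (hf.pow_const p)
    (aemeasurable_const (b := (1 : ENNReal))) (p := 1 / p) (q := 1 - 1 / p) (by positivity)
    (by rw [sub_nonneg, div_le_one hp0]; exact hp) (by ring)
  simp only [ENNReal.one_rpow, mul_one, lintegral_const, measure_univ, ← ENNReal.rpow_mul,
    mul_one_div_cancel hp0.ne', ENNReal.rpow_one] at h
  calc (∫⁻ a, f a ∂μ) ^ p ≤ ((∫⁻ a, f a ^ p ∂μ) ^ (1 / p)) ^ p := by gcongr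
    _ = _ := by rw [← ENNReal.rpow_mul, one_div_mul_cancel hp0.ne', ENNReal.rpow_one]

lemma lintegral_prod_gaussMeasure_shift (d : ℕ) (r : ℝ)
    {f : EuclideanSpace ℝ (Fin d) → ENNReal} (hf : Measurable f)
    {R : EuclideanSpace ℝ (Fin d) → EuclideanSpace ℝ (Fin d)} (hR : Measurable R) :
    ∫⁻ p : EuclideanSpace ℝ (Fin d) × EuclideanSpace ℝ (Fin d), f (p.1 - r • R p.2)
      ∂(volume.prod (gaussMeasure d)) = ∫⁻ x, f x := by
  rw [lintegral_prod_symm _ (by fun_prop)]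
  simp [lintegral_sub_right_eq_self]

lemma lintegral_rpow_le_of_le_average (d : ℕ) {p : ℝ} (hp : 1 ≤ p) (r : ℝ)
    {f g : EuclideanSpace ℝ (Fin d) → ENNReal} (hf : Measurable f)
    (h : ∀ x, g x ≤ ∫⁻ w, f (x - r • w) ∂gaussMeasure d) :
    ∫⁻ x, g x ^ p ≤ ∫⁻ x, f x ^ p := by
  rw [← lintegral_prod_gaussMeasure_shift d r (hf.pow_const p) measurable_id,
    lintegral_prod _ (by fun_prop)]
  refine lintegral_mono fun x => ?_
  refine (ENNReal.rpow_le_rpow (h x) (by linarith)).trans ?_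
  exact rpow_lintegral_le (by fun_prop) hp

/-- The loss of `∫ u ^ (1 + δ)` in one averaging step controls the mean oscillation of `u` between
a Gaussian shift and its image under an isometry `R`. The average is unchanged when `f (x - r w)`
is replaced by the mean of `f (x - r w)` and `f (x - r R w)`, so the loss is at least the midpoint
convexity defect of `s ^ (1 + δ)` at these two values. -/
lemma oscillation_le (d : ℕ) {δ : ℝ} (hδ : 0 < δ) (hδ1 : δ < 1) (r : ℝ)
    (R : EuclideanSpace ℝ (Fin d) ≃ₗᵢ[ℝ] EuclideanSpace ℝ (Fin d))
    {u v : EuclideanSpace ℝ (Fin d) → ℝ} (hu : Measurable u) (hu0 : ∀ x, 0 ≤ u x)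
    (havg : ∀ x, ENNReal.ofReal (v x) ≤ ∫⁻ w, ENNReal.ofReal (u (x - r • w)) ∂gaussMeasure d)
    (hfin : ∫⁻ x, ENNReal.ofReal (u x) ^ (1 + δ) ≠ ⊤) :
    ∫⁻ x, ∫⁻ w, ENNReal.ofReal |u (x - r • w) - u (x - r • R w)| ∂gaussMeasure d ≤
      (ENNReal.ofReal (8 / (δ * (1 + δ))) * ((∫⁻ x, ENNReal.ofReal (u x) ^ (1 + δ)) -
          ∫⁻ x, ENNReal.ofReal (v x) ^ (1 + δ))) ^ (1 / 2 : ℝ) *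
        (2 * ∫⁻ x, ENNReal.ofReal (u x) ^ (1 - δ)) ^ (1 / 2 : ℝ) := by
  have hR : Measurable R := R.continuous.measurable
  set μ := (volume : Measure (EuclideanSpace ℝ (Fin d))).prod (gaussMeasure d) with hμ
  set P : EuclideanSpace ℝ (Fin d) × EuclideanSpace ℝ (Fin d) → ℝ :=
    fun p => u (p.1 - r • p.2) with hP
  set Q : EuclideanSpace ℝ (Fin d) × EuclideanSpace ℝ (Fin d) → ℝ :=
    fun p => u (p.1 - r • R p.2) with hQ
  have hPm : Measurable P := by fun_prop
  have hQm : Measurable Q := by fun_prop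
  have hP0 : ∀ p, 0 ≤ P p := fun p => hu0 _
  have hQ0 : ∀ p, 0 ≤ Q p := fun p => hu0 _
  have hPint : ∀ s : ℝ, ∫⁻ p, ENNReal.ofReal (P p) ^ s ∂μ = ∫⁻ x, ENNReal.ofReal (u x) ^ s :=
    fun s => lintegral_prod_gaussMeasure_shift d r (hu.ennreal_ofReal.pow_const s) measurable_id
  have hQint : ∀ s : ℝ, ∫⁻ p, ENNReal.ofReal (Q p) ^ s ∂μ = ∫⁻ x, ENNReal.ofReal (u x) ^ s :=
    fun s => lintegral_prod_gaussMeasure_shift d r (hu.ennreal_ofReal.pow_const s) hR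
  set N : EuclideanSpace ℝ (Fin d) × EuclideanSpace ℝ (Fin d) → ℝ :=
    fun p => (P p ^ (1 + δ) + Q p ^ (1 + δ)) / 2 - ((P p + Q p) / 2) ^ (1 + δ) with hN
  have hNm : Measurable N := by fun_prop
  have hkey : ∀ p, δ * (1 + δ) / 8 * (P p - Q p) ^ 2 ≤
      N p * (P p ^ (1 - δ) + Q p ^ (1 - δ)) := fun p => convexity_defect_lower hδ hδ1 (hP0 p) (hQ0 p)
  have hc : 0 < δ * (1 + δ) / 8 := by positivity
  have hN0 : ∀ p, 0 ≤ N p := by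
    intro p
    have hs : 0 ≤ P p ^ (1 - δ) + Q p ^ (1 - δ) :=
      add_nonneg (Real.rpow_nonneg (hP0 p) _) (Real.rpow_nonneg (hQ0 p) _)
    rcases hs.eq_or_lt with h0 | h0
    · have h1 : P p ^ (1 - δ) = 0 := by
        linarith [Real.rpow_nonneg (hP0 p) (1 - δ), Real.rpow_nonneg (hQ0 p) (1 - δ)]
      have h2 : Q p ^ (1 - δ) = 0 := by
        linarith [Real.rpow_nonneg (hP0 p) (1 - δ), Real.rpow_nonneg (hQ0 p) (1 - δ)]
      have h3 := ((Real.rpow_eq_zero (hP0 p) (by linarith)).1 h1)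
      have h4 := ((Real.rpow_eq_zero (hQ0 p) (by linarith)).1 h2)
      simp [hN, h3, h4, Real.zero_rpow (show 1 + δ ≠ 0 by linarith)]
    · by_contra hneg
      have := mul_neg_of_neg_of_pos (not_le.1 hneg) h0
      have h1 : 0 ≤ δ * (1 + δ) / 8 * (P p - Q p) ^ 2 := by positivity
      linarith [hkey p]
  have hvle : ∫⁻ x, ENNReal.ofReal (v x) ^ (1 + δ) ≤
      ∫⁻ p, ENNReal.ofReal ((P p + Q p) / 2) ^ (1 + δ) ∂μ := by
    rw [hμ, lintegral_prod _ (by fun_prop)]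
    refine lintegral_mono fun x => ?_
    refine le_trans (ENNReal.rpow_le_rpow ?_ (by linarith))
      (rpow_lintegral_le (by fun_prop) (by linarith))
    refine (havg x).trans (le_of_eq ?_)
    have hm : Measurable fun w => ENNReal.ofReal (u (x - r • w)) := by fun_prop
    have hsym := lintegral_gaussMeasure_comp_isometry d R hm
    have hsplit : ∀ w, ENNReal.ofReal ((P (x, w) + Q (x, w)) / 2) =
        2⁻¹ * (ENNReal.ofReal (u (x - r • w)) + ENNReal.ofReal (u (x - r • R w))) := by
      intro w
      rw [div_eq_inv_mul, ENNReal.ofReal_mul (by norm_num), ENNReal.ofReal_add (hP0 _) (hQ0 _),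
        ENNReal.ofReal_inv_of_pos (by norm_num)]
      simp [hP, hQ]
    simp_rw [hsplit]
    rw [lintegral_const_mul _ (by fun_prop), lintegral_add_left hm, hsym, ← two_mul,
      ← mul_assoc, ENNReal.inv_mul_cancel (by norm_num) (by norm_num), one_mul]
  have hsum : ∫⁻ p, ENNReal.ofReal (N p) ∂μ +
      ∫⁻ p, ENNReal.ofReal ((P p + Q p) / 2) ^ (1 + δ) ∂μ =
      ∫⁻ x, ENNReal.ofReal (u x) ^ (1 + δ) := by
    rw [← lintegral_add_left (by fun_prop)]
    have hpt : ∀ p, ENNReal.ofReal (N p) + ENNReal.ofReal ((P p + Q p) / 2) ^ (1 + δ) =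
        2⁻¹ * (ENNReal.ofReal (P p) ^ (1 + δ) + ENNReal.ofReal (Q p) ^ (1 + δ)) := by
      intro p
      have hPQ : 0 ≤ (P p + Q p) / 2 := by linarith [hP0 p, hQ0 p]
      have e1 := Real.rpow_nonneg (hP0 p) (1 + δ)
      have e2 := Real.rpow_nonneg (hQ0 p) (1 + δ)
      rw [ENNReal.ofReal_rpow_of_nonneg hPQ (by linarith),
        ENNReal.ofReal_rpow_of_nonneg (hP0 p) (by linarith),
        ENNReal.ofReal_rpow_of_nonneg (hQ0 p) (by linarith),
        ← ENNReal.ofReal_add (hN0 p) (Real.rpow_nonneg hPQ _), ← ENNReal.ofReal_add e1 e2,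
        show (2⁻¹ : ENNReal) = ENNReal.ofReal 2⁻¹ by
          rw [ENNReal.ofReal_inv_of_pos (by norm_num)]; simp,
        ← ENNReal.ofReal_mul (by norm_num)]
      congr 1
      simp only [hN]; ring
    simp_rw [hpt]
    rw [lintegral_const_mul _ (by fun_prop), lintegral_add_left (by fun_prop), hPint, hQint,
      ← two_mul, ← mul_assoc, ENNReal.inv_mul_cancel (by norm_num) (by norm_num), one_mul]
  have hNle : ∫⁻ p, ENNReal.ofReal (N p) ∂μ ≤ (∫⁻ x, ENNReal.ofReal (u x) ^ (1 + δ)) -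
      ∫⁻ x, ENNReal.ofReal (v x) ^ (1 + δ) := by
    have hadd : ∫⁻ p, ENNReal.ofReal (N p) ∂μ + ∫⁻ x, ENNReal.ofReal (v x) ^ (1 + δ) ≤
      ∫⁻ x, ENNReal.ofReal (u x) ^ (1 + δ) := by
        rw [← hsum]; gcongr
    refine ENNReal.le_sub_of_add_le_right ?_ hadd
    exact ne_top_of_le_ne_top hfin (le_add_self.trans hadd)
  have hpt : ∀ p, ENNReal.ofReal |P p - Q p| ≤
      (ENNReal.ofReal (8 / (δ * (1 + δ))) * ENNReal.ofReal (N p)) ^ (1 / 2 : ℝ) *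
        (ENNReal.ofReal (P p) ^ (1 - δ) + ENNReal.ofReal (Q p) ^ (1 - δ)) ^ (1 / 2 : ℝ) := by
    intro p
    have e1 := Real.rpow_nonneg (hP0 p) (1 - δ)
    have e2 := Real.rpow_nonneg (hQ0 p) (1 - δ)
    rw [ENNReal.ofReal_rpow_of_nonneg (hP0 p) (by linarith),
      ENNReal.ofReal_rpow_of_nonneg (hQ0 p) (by linarith), ← ENNReal.ofReal_add e1 e2,
      ← ENNReal.ofReal_mul (by positivity),
      ← ENNReal.mul_rpow_of_nonneg _ _ (by norm_num : (0 : ℝ) ≤ 1 / 2),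
      ← ENNReal.ofReal_mul (mul_nonneg (by positivity) (hN0 p)),
      ENNReal.ofReal_rpow_of_nonneg
        (mul_nonneg (mul_nonneg (by positivity) (hN0 p)) (add_nonneg e1 e2)) (by norm_num),
      ← Real.sqrt_eq_rpow]
    refine ENNReal.ofReal_le_ofReal (Real.abs_le_sqrt ?_)
    calc (P p - Q p) ^ 2 = 8 / (δ * (1 + δ)) * (δ * (1 + δ) / 8 * (P p - Q p) ^ 2) := by
          field_simp
      _ ≤ 8 / (δ * (1 + δ)) * (N p * (P p ^ (1 - δ) + Q p ^ (1 - δ))) := by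
          have := hkey p
          gcongr
      _ = _ := by ring
  have hmeas : Measurable fun p => ENNReal.ofReal |P p - Q p| := by fun_prop
  rw [← lintegral_prod (μ := volume) (ν := gaussMeasure d)
    (fun p => ENNReal.ofReal |P p - Q p|) hmeas.aemeasurable, ← hμ]
  refine (lintegral_mono hpt).trans ?_
  refine (ENNReal.lintegral_mul_norm_pow_le (by fun_prop) (by fun_prop) (by norm_num)
    (by norm_num) (by norm_num)).trans ?_
  rw [lintegral_const_mul _ (by fun_prop), lintegral_add_left (by fun_prop), hPint, hQint,
    ← two_mul]
  gcongr

/-! ### Recovering the gradient by Fatou's lemma -/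

/-- The reflection of `ℝ^d` that flips the sign of the `j`-th coordinate. -/
noncomputable def coordFlip (d : ℕ) (j : Fin d) :
    EuclideanSpace ℝ (Fin d) ≃ₗᵢ[ℝ] EuclideanSpace ℝ (Fin d) :=
  (Submodule.span ℝ {EuclideanSpace.single j (1 : ℝ)})ᗮ.reflection

lemma coordFlip_apply (d : ℕ) (j : Fin d) (w : EuclideanSpace ℝ (Fin d)) :
    coordFlip d j w = w - (2 * w j) • EuclideanSpace.single j (1 : ℝ) := by
  rw [coordFlip, Submodule.reflection_orthogonal_apply, Submodule.reflection_singleton_apply]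
  simp [EuclideanSpace.inner_single_left, mul_smul, two_smul]

/-- A truncated first absolute moment of the `j`-th coordinate under `gaussMeasure d`; the
truncation at `1` only serves to make its finiteness obvious. -/
noncomputable def coordMoment (d : ℕ) (j : Fin d) : ENNReal :=
  ∫⁻ w, ENNReal.ofReal (min (2 * |w j|) 1) ∂gaussMeasure d

lemma coordMoment_ne_top (d : ℕ) (j : Fin d) : coordMoment d j ≠ ⊤ := by
  refine ne_top_of_le_ne_top ENNReal.one_ne_top ?_
  calc coordMoment d j ≤ ∫⁻ _, 1 ∂gaussMeasure d :=
        lintegral_mono fun w => by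
          rw [← ENNReal.ofReal_one]; exact ENNReal.ofReal_le_ofReal (min_le_right _ _)
    _ = 1 := by simp

lemma coordMoment_ne_zero (d : ℕ) (j : Fin d) : coordMoment d j ≠ 0 := by
  have hm : Measurable fun w : EuclideanSpace ℝ (Fin d) =>
      ENNReal.ofReal (min (2 * |w j|) 1) := by fun_prop
  rw [coordMoment, lintegral_gaussMeasure d hm]
  have hcont : Continuous fun w : EuclideanSpace ℝ (Fin d) =>
      ENNReal.ofReal (heatKernel d 1 w) * ENNReal.ofReal (min (2 * |w j|) 1) := by
    have h1 := continuous_heatKernel d 1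
    have : Continuous fun w : EuclideanSpace ℝ (Fin d) =>
        ENNReal.ofReal (heatKernel d 1 w * min (2 * |w j|) 1) :=
      ENNReal.continuous_ofReal.comp (by fun_prop)
    refine this.congr fun w => ENNReal.ofReal_mul (heatKernel_nonneg d one_pos w)
  intro h0
  rw [lintegral_eq_zero_iff hcont.measurable] at h0
  have h1 := (Continuous.ae_eq_iff_eq volume hcont continuous_const).1 h0
  have h2 : ENNReal.ofReal (heatKernel d 1 (EuclideanSpace.single j (1 : ℝ))) *
      ENNReal.ofReal (min (2 * |EuclideanSpace.single j (1 : ℝ) j|) 1) = 0 :=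
    congrFun h1 (EuclideanSpace.single j (1 : ℝ))
  rw [mul_eq_zero, ENNReal.ofReal_eq_zero, ENNReal.ofReal_eq_zero] at h2
  rcases h2 with h2 | h2
  · refine absurd h2 (not_le.2 ?_)
    unfold heatKernel; positivity
  · simp at h2
    norm_num at h2

/-- Fatou's lemma: the oscillation between a Gaussian shift of size `r` and its reflection
in the `j`-th coordinate, divided by `r`, dominates `∫ |∂ⱼ u|` as `r → 0`. -/
lemma gradient_le_liminf (d : ℕ) (j : Fin d) {u : EuclideanSpace ℝ (Fin d) → ℝ}
    (hu : Differentiable ℝ u) {r : ℕ → ℝ} (hr0 : ∀ n, 0 < r n)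
    (hr : Filter.Tendsto r Filter.atTop (nhds 0)) :
    coordMoment d j *
        ∫⁻ x, ENNReal.ofReal |fderiv ℝ u x (EuclideanSpace.single j 1)| ≤
      Filter.liminf (fun n => ENNReal.ofReal (r n)⁻¹ * ∫⁻ x, ∫⁻ w,
        ENNReal.ofReal |u (x - r n • w) - u (x - r n • coordFlip d j w)| ∂gaussMeasure d)
        Filter.atTop := by
  have hR : Measurable (coordFlip d j) := (coordFlip d j).continuous.measurable
  have hum : Measurable u := hu.continuous.measurable
  have hDm : Measurable fun x => fderiv ℝ u x (EuclideanSpace.single j 1) :=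
    measurable_fderiv_apply_const ℝ u _
  set F : ℕ → EuclideanSpace ℝ (Fin d) × EuclideanSpace ℝ (Fin d) → ENNReal := fun n p =>
    ENNReal.ofReal (r n)⁻¹ *
      ENNReal.ofReal |u (p.1 - r n • p.2) - u (p.1 - r n • coordFlip d j p.2)| with hF
  have hFm : ∀ n, Measurable (F n) := fun n => by fun_prop
  have hFint : ∀ n, ∫⁻ p, F n p ∂(volume.prod (gaussMeasure d)) =
      ENNReal.ofReal (r n)⁻¹ * ∫⁻ x, ∫⁻ w,
        ENNReal.ofReal |u (x - r n • w) - u (x - r n • coordFlip d j w)| ∂gaussMeasure d := by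
    intro n
    rw [lintegral_prod _ (hFm n).aemeasurable]
    simp only [hF]
    rw [← lintegral_const_mul' _ _ ENNReal.ofReal_ne_top]
    refine lintegral_congr fun x => ?_
    rw [lintegral_const_mul' _ _ ENNReal.ofReal_ne_top]
  simp_rw [← hFint]
  refine le_trans ?_ (lintegral_liminf_le hFm)
  have hleft : coordMoment d j *
        ∫⁻ x, ENNReal.ofReal |fderiv ℝ u x (EuclideanSpace.single j 1)| =
      ∫⁻ p : EuclideanSpace ℝ (Fin d) × EuclideanSpace ℝ (Fin d),
        ENNReal.ofReal (min (2 * |p.2 j|) 1) *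
          ENNReal.ofReal |fderiv ℝ u p.1 (EuclideanSpace.single j 1)|
          ∂(volume.prod (gaussMeasure d)) := by
    rw [lintegral_prod _ (by fun_prop), ← lintegral_const_mul' _ _ (coordMoment_ne_top d j)]
    refine lintegral_congr fun x => ?_
    rw [coordMoment, ← lintegral_mul_const' _ _ ENNReal.ofReal_ne_top]
  rw [hleft]
  refine lintegral_mono fun p => ?_
  obtain ⟨x, w⟩ := p
  have hline : ∀ a : EuclideanSpace ℝ (Fin d),
      HasDerivAt (fun s : ℝ => u (x - s • a)) (-(fderiv ℝ u x a)) 0 := by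
    intro a
    have h1 : HasDerivAt (fun s : ℝ => x - s • a) (-a) 0 := by
      simpa using ((hasDerivAt_id (0 : ℝ)).smul_const a).const_sub x
    have h2 : HasFDerivAt u (fderiv ℝ u x) (x - (0 : ℝ) • a) := by
      simpa using (hu x).hasFDerivAt
    have h3 := h2.comp_hasDerivAt (0 : ℝ) h1
    rw [map_neg] at h3
    exact h3
  have hdiff := ((hline w).sub (hline (coordFlip d j w))).tendsto_slope_zero
  have hr' : Filter.Tendsto r Filter.atTop (nhdsWithin 0 {0}ᶜ) :=
    tendsto_nhdsWithin_iff.2 ⟨hr, Filter.Eventually.of_forall fun n => (hr0 n).ne'⟩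
  have hlim := (hdiff.comp hr').abs
  have hval : |-(fderiv ℝ u x w) - -(fderiv ℝ u x (coordFlip d j w))| =
      2 * |w j| * |fderiv ℝ u x (EuclideanSpace.single j 1)| := by
    rw [coordFlip_apply, map_sub, map_smul, smul_eq_mul, ← abs_neg]
    rw [show (2 : ℝ) * |w j| = |2 * w j| by rw [abs_mul]; norm_num, ← abs_mul]
    congr 1; ring
  rw [hval] at hlim
  have hlim' : Filter.Tendsto (fun n => F n (x, w)) Filter.atTop
      (nhds (ENNReal.ofReal (2 * |w j| * |fderiv ℝ u x (EuclideanSpace.single j 1)|))) := by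
    refine (ENNReal.tendsto_ofReal hlim).congr fun n => ?_
    have hinv : 0 ≤ (r n)⁻¹ := inv_nonneg.2 (hr0 n).le
    simp only [hF, ← ENNReal.ofReal_mul hinv]
    simp [abs_mul, abs_of_pos (hr0 n)]
  rw [hlim'.liminf_eq, ← ENNReal.ofReal_mul (by positivity)]
  exact ENNReal.ofReal_le_ofReal (mul_le_mul_of_nonneg_right (min_le_left _ _) (abs_nonneg _))

/-! ### Time increments of a decreasing function -/

/-- Telescoping: after the shift `t ↦ t + h` only the part of the first integral over
`(a, a + h]` survives. -/
lemma lintegral_antitone_increment_le {φ : ℝ → ENNReal} (hφ : AntitoneOn φ (Ioi 0)) {a b h : ℝ}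
    (ha : 0 < a) (hh : 0 < h) (hfin : φ a ≠ ⊤) :
    ∫⁻ t in Ioc a b, (φ t - φ (t + h)) ≤ ENNReal.ofReal h * φ a := by
  have hle : ∀ t ∈ Ioc a b, φ (t + h) ≤ φ t := fun t ht =>
    hφ (show 0 < t from ha.trans ht.1) (show 0 < t + h by linarith [ht.1]) (by linarith)
  have hanti : AntitoneOn (fun t => φ (t + h)) (Ioc a b) := fun s hs t ht hst =>
    hφ (show 0 < s + h by linarith [hs.1]) (show 0 < t + h by linarith [ht.1]) (by linarith)
  have hbd : ∀ t, a < t → φ t ≤ φ a := fun t ht => hφ ha (ha.trans ht) ht.le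
  have hfin2 : ∫⁻ t in Ioc a b, φ (t + h) ≠ ⊤ := by
    have h1 : ∫⁻ t in Ioc a b, φ (t + h) ≤ ∫⁻ _ in Ioc a b, φ a :=
      setLIntegral_mono' measurableSet_Ioc fun t ht => hbd _ (by linarith [ht.1])
    refine ne_top_of_le_ne_top ?_ h1
    rw [setLIntegral_const, Real.volume_Ioc]
    exact ENNReal.mul_ne_top hfin ENNReal.ofReal_ne_top
  rw [lintegral_sub' (aemeasurable_restrict_of_antitoneOn measurableSet_Ioc hanti) hfin2
    ((ae_restrict_iff' measurableSet_Ioc).2 (ae_of_all _ hle)), tsub_le_iff_right]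
  have hshift : ∫⁻ t in Ioc a b, φ (t + h) = ∫⁻ t in Ioc (a + h) (b + h), φ t := by
    rw [← (measurePreserving_add_right volume h).setLIntegral_comp_preimage_emb
      (MeasurableEquiv.addRight h).measurableEmbedding φ (Ioc (a + h) (b + h))]
    simp
  have hsub : Ioc a b ⊆ Ioc a (a + h) ∪ Ioc (a + h) (b + h) := by
    intro t ht
    by_cases hc : t ≤ a + h
    · exact Or.inl ⟨ht.1, hc⟩
    · exact Or.inr ⟨not_le.1 hc, by linarith [ht.2]⟩
  calc ∫⁻ t in Ioc a b, φ t ≤ ∫⁻ t in Ioc a (a + h) ∪ Ioc (a + h) (b + h), φ t :=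
        lintegral_mono_set hsub
    _ ≤ (∫⁻ t in Ioc a (a + h), φ t) + ∫⁻ t in Ioc (a + h) (b + h), φ t :=
        lintegral_union_le _ _ _
    _ ≤ ENNReal.ofReal h * φ a + ∫⁻ t in Ioc a b, φ (t + h) := by
        rw [hshift]
        gcongr
        calc ∫⁻ t in Ioc a (a + h), φ t ≤ ∫⁻ _ in Ioc a (a + h), φ a :=
              setLIntegral_mono' measurableSet_Ioc fun t ht => hbd t ht.1
          _ = _ := by rw [setLIntegral_const, Real.volume_Ioc, mul_comm]; simp

/-! ### Sub-solutions of the heat flow -/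

/-- A nonnegative function lying below the heat kernel with pole `y` and decaying at least as fast
as the heat flow. The field `le_average` says `u (t + r ^ 2) ≤ heatKernel d (r ^ 2) * u t`
(a convolution), written as an average over Gaussian shifts. -/
structure IsSubHeatFlow (d : ℕ) (y : EuclideanSpace ℝ (Fin d))
    (u : ℝ → EuclideanSpace ℝ (Fin d) → ℝ) : Prop where
  differentiable : ∀ t, 0 < t → Differentiable ℝ (u t)
  nonneg : ∀ t, 0 < t → ∀ x, 0 ≤ u t x
  le_heatKernel : ∀ t, 0 < t → ∀ x, u t x ≤ heatKernel d t (x - y)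
  le_average : ∀ t r, 0 < t → 0 < r → ∀ x, ENNReal.ofReal (u (t + r ^ 2) x) ≤
    ∫⁻ w, ENNReal.ofReal (u t (x - r • w)) ∂gaussMeasure d

namespace IsSubHeatFlow

variable {d : ℕ} {y : EuclideanSpace ℝ (Fin d)} {u : ℝ → EuclideanSpace ℝ (Fin d) → ℝ}

lemma measurable (H : IsSubHeatFlow d y u) {t : ℝ} (ht : 0 < t) : Measurable (u t) :=
  (H.differentiable t ht).continuous.measurable

lemma antitoneOn_lintegral_rpow (H : IsSubHeatFlow d y u) {p : ℝ} (hp : 1 ≤ p) :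
    AntitoneOn (fun t => ∫⁻ x, ENNReal.ofReal (u t x) ^ p) (Ioi 0) := by
  intro s hs t ht hst
  rcases hst.eq_or_lt with rfl | hlt
  · exact le_rfl
  have hr : 0 < Real.sqrt (t - s) := Real.sqrt_pos.2 (by linarith)
  refine lintegral_rpow_le_of_le_average d hp (Real.sqrt (t - s))
    (H.measurable hs).ennreal_ofReal fun x => ?_
  have := H.le_average s _ hs hr x
  rwa [Real.sq_sqrt (by linarith), add_sub_cancel] at this

lemma antitoneOn_mass (H : IsSubHeatFlow d y u) :
    AntitoneOn (fun t => ∫⁻ x, ENNReal.ofReal (u t x)) (Ioi 0) := by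
  simpa using H.antitoneOn_lintegral_rpow le_rfl

lemma mass_le_one (H : IsSubHeatFlow d y u) {t : ℝ} (ht : 0 < t) :
    ∫⁻ x, ENNReal.ofReal (u t x) ≤ 1 := by
  rw [← lintegral_heatKernel d ht,
    ← lintegral_sub_right_eq_self (fun x => ENNReal.ofReal (heatKernel d t x)) y]
  exact lintegral_mono fun x => ENNReal.ofReal_le_ofReal (H.le_heatKernel t ht x)

lemma lintegral_rpow_one_add_le (H : IsSubHeatFlow d y u) {δ t : ℝ} (hδ : 0 < δ) (ht : 0 < t) :
    ∫⁻ x, ENNReal.ofReal (u t x) ^ (1 + δ) ≤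
      ENNReal.ofReal ((4 * π * t) ^ (-(d : ℝ) / 2)) ^ δ * ∫⁻ x, ENNReal.ofReal (u t x) := by
  rw [← lintegral_const_mul _ (H.measurable ht).ennreal_ofReal]
  refine lintegral_mono fun x => ?_
  rw [add_comm, ENNReal.rpow_add_of_nonneg _ _ hδ.le zero_le_one, ENNReal.rpow_one]
  gcongr
  exact (H.le_heatKernel t ht x).trans (heatKernel_le d ht _)

/-- Interpolation between the mass of `u t` and the square root of the Gaussian above it. -/
lemma lintegral_rpow_one_sub_le (H : IsSubHeatFlow d y u) {δ t : ℝ} (hδ : 0 < δ)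
    (hδ2 : δ < 1 / 2) (ht : 0 < t) :
    ∫⁻ x, ENNReal.ofReal (u t x) ^ (1 - δ) ≤
      (∫⁻ x, ENNReal.ofReal (u t x)) ^ (1 - 2 * δ) *
        ENNReal.ofReal ((16 * π * t) ^ ((d : ℝ) / 4)) ^ (2 * δ) := by
  have hk : Measurable fun x => ENNReal.ofReal (heatKernel d t (x - y)) ^ (1 / 2 : ℝ) :=
    ((continuous_heatKernel d t).measurable.comp
      (measurable_id.sub_const y)).ennreal_ofReal.pow_const _
  rw [← lintegral_sqrt_heatKernel d ht, ← lintegral_sub_right_eq_self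
    (fun x => ENNReal.ofReal (heatKernel d t x) ^ (1 / 2 : ℝ)) y]
  refine le_trans (lintegral_mono fun x => ?_) (ENNReal.lintegral_mul_norm_pow_le
    (H.measurable ht).ennreal_ofReal.aemeasurable hk.aemeasurable
    (by linarith) (by linarith) (by ring))
  rw [← ENNReal.rpow_mul, show 1 / 2 * (2 * δ) = δ by ring,
    show 1 - δ = (1 - 2 * δ) + δ by ring,
    ENNReal.rpow_add_of_nonneg _ _ (by linarith) hδ.le]
  gcongr
  exact H.le_heatKernel t ht x

end IsSubHeatFlow

/-! ### The gradient on a dyadic time block -/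

/-- The `L¹` gradient estimate on a dyadic time block, with a power of the mass `m` of `u a` as
close to `1` as desired. The proof combines `oscillation_le` with `gradient_le_liminf`: with
`φ t = ∫ (u t) ^ (1 + δ)` and `K` a bound for `∫ (u t) ^ (1 - δ)` on the block, `∫ |∂ⱼ u t|` is at
most a constant times `(K * (φ t - φ (t + h)) / h) ^ (1 / 2)` as `h → 0`. The increments telescope,
so the time integral is at most a constant times `(a * K * φ a) ^ (1 / 2)`, while
`K * φ a` is at most a constant times `m ^ (2 - 2 * δ)`. -/
lemma exists_dyadic_gradient_bound (d : ℕ) (j : Fin d) {δ : ℝ} (hδ : 0 < δ) (hδ2 : δ < 1 / 2) :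
    ∃ C : ENNReal, C ≠ ⊤ ∧ ∀ (y : EuclideanSpace ℝ (Fin d))
      (u : ℝ → EuclideanSpace ℝ (Fin d) → ℝ), IsSubHeatFlow d y u → ∀ a : ℝ, 0 < a →
      ∫⁻ t in Ioc a (2 * a), ∫⁻ x,
          ENNReal.ofReal |fderiv ℝ (u t) x (EuclideanSpace.single j 1)| ≤
        C * ENNReal.ofReal a ^ (1 / 2 : ℝ) * (∫⁻ x, ENNReal.ofReal (u a x)) ^ (1 - δ) := by
  set A := ENNReal.ofReal (8 / (δ * (1 + δ))) with hA
  set B := ENNReal.ofReal (8 ^ ((d : ℝ) / 2 * δ)) with hB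
  have hκ := coordMoment_ne_zero d j
  have hκt := coordMoment_ne_top d j
  set κ := coordMoment d j with hκdef
  refine ⟨κ⁻¹ * (A * (2 * B)) ^ (1 / 2 : ℝ), ?_, ?_⟩
  · refine ENNReal.mul_ne_top (ENNReal.inv_ne_top.2 hκ) ?_
    exact ENNReal.rpow_ne_top_of_nonneg (by norm_num) (ENNReal.mul_ne_top ENNReal.ofReal_ne_top
      (ENNReal.mul_ne_top (by norm_num) ENNReal.ofReal_ne_top))
  intro y u H a ha
  set m := ∫⁻ x, ENNReal.ofReal (u a x) with hm
  have hm1 : m ≤ 1 := H.mass_le_one ha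
  set φ : ℝ → ENNReal := fun t => ∫⁻ x, ENNReal.ofReal (u t x) ^ (1 + δ) with hφ
  have hφanti : AntitoneOn φ (Ioi 0) := H.antitoneOn_lintegral_rpow (by linarith)
  have hφfin : ∀ t, 0 < t → φ t ≠ ⊤ := by
    intro t ht
    refine ne_top_of_le_ne_top ?_ (H.lintegral_rpow_one_add_le hδ ht)
    exact ENNReal.mul_ne_top (ENNReal.rpow_ne_top_of_nonneg hδ.le ENNReal.ofReal_ne_top)
      (ne_top_of_le_ne_top ENNReal.one_ne_top (H.mass_le_one ht))
  set K := m ^ (1 - 2 * δ) * ENNReal.ofReal ((32 * π * a) ^ ((d : ℝ) / 4)) ^ (2 * δ) with hK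
  have hKle : ∀ t ∈ Ioc a (2 * a), ∫⁻ x, ENNReal.ofReal (u t x) ^ (1 - δ) ≤ K := by
    intro t ht
    have ht0 : 0 < t := ha.trans ht.1
    refine (H.lintegral_rpow_one_sub_le hδ hδ2 ht0).trans ?_
    have h1 := H.antitoneOn_mass (show a ∈ Ioi 0 from ha) (show t ∈ Ioi 0 from ht0) ht.1.le
    have h2 : 16 * π * t ≤ 32 * π * a := by nlinarith [ht.2, Real.pi_pos]
    rw [hK]
    refine mul_le_mul' (ENNReal.rpow_le_rpow h1 (by linarith))
      (ENNReal.rpow_le_rpow (ENNReal.ofReal_le_ofReal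
        (Real.rpow_le_rpow (by positivity) h2 (by positivity))) (by positivity))
  have hKfin : K ≠ ⊤ := by
    refine ENNReal.mul_ne_top (ENNReal.rpow_ne_top_of_nonneg (by linarith)
      (ne_top_of_le_ne_top ENNReal.one_ne_top hm1))
      (ENNReal.rpow_ne_top_of_nonneg (by linarith) ENNReal.ofReal_ne_top)
  have hKφ : K * φ a ≤ B * m ^ (2 * (1 - δ)) := by
    calc K * φ a ≤ (m ^ (1 - 2 * δ) * ENNReal.ofReal ((32 * π * a) ^ ((d : ℝ) / 4)) ^ (2 * δ)) *
          (ENNReal.ofReal ((4 * π * a) ^ (-(d : ℝ) / 2)) ^ δ * m) := by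
            rw [hK]
            exact mul_le_mul' le_rfl (H.lintegral_rpow_one_add_le hδ ha)
      _ = (ENNReal.ofReal ((32 * π * a) ^ ((d : ℝ) / 4)) ^ (2 * δ) *
          ENNReal.ofReal ((4 * π * a) ^ (-(d : ℝ) / 2)) ^ δ) * (m ^ (1 - 2 * δ) * m) := by ring
      _ = B * m ^ (2 * (1 - δ)) := by
        congr 1
        · rw [ENNReal.ofReal_rpow_of_nonneg (by positivity) (by linarith),
            ENNReal.ofReal_rpow_of_nonneg (by positivity) hδ.le,
            ← ENNReal.ofReal_mul (by positivity), hB]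
          congr 1
          rw [show 32 * π * a = 8 * (4 * π * a) by ring,
            Real.mul_rpow (x := 8) (by norm_num) (by positivity),
            Real.mul_rpow (x := 8 ^ ((d : ℝ) / 4)) (by positivity) (by positivity),
            ← Real.rpow_mul (by norm_num : (0 : ℝ) ≤ 8),
            ← Real.rpow_mul (by positivity : 0 ≤ 4 * π * a),
            ← Real.rpow_mul (by positivity : 0 ≤ 4 * π * a), mul_assoc,
            ← Real.rpow_add (by positivity : 0 < 4 * π * a),
            show (d : ℝ) / 4 * (2 * δ) + -d / 2 * δ = 0 by ring, Real.rpow_zero, mul_one]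
          congr 1; ring
        · nth_rw 2 [← ENNReal.rpow_one m]
          rw [← ENNReal.rpow_add_of_nonneg _ _ (by linarith) zero_le_one]
          congr 1; ring
  -- Time steps are `h = (r n) ^ 2`.
  set r : ℕ → ℝ := fun n => 1 / ((n : ℝ) + 1) with hr
  have hr0 : ∀ n, 0 < r n := fun n => by simp only [hr]; positivity
  have hrlim : Filter.Tendsto r Filter.atTop (nhds 0) := tendsto_one_div_add_atTop_nhds_zero_nat
  set ψ : ℕ → ℝ → ENNReal := fun n t =>
    A * (2 * K) * ENNReal.ofReal (r n ^ 2)⁻¹ * (φ t - φ (t + r n ^ 2)) with hψ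
  have hpoint : ∀ t ∈ Ioc a (2 * a), κ * ∫⁻ x,
      ENNReal.ofReal |fderiv ℝ (u t) x (EuclideanSpace.single j 1)| ≤
        Filter.liminf (fun n => ψ n t ^ (1 / 2 : ℝ)) Filter.atTop := by
    intro t ht
    have ht0 : 0 < t := ha.trans ht.1
    refine (gradient_le_liminf d j (H.differentiable t ht0) hr0 hrlim).trans ?_
    refine Filter.liminf_le_liminf (Filter.Eventually.of_forall fun n => ?_)
    have hosc := oscillation_le d hδ (by linarith) (r n) (coordFlip d j) (H.measurable ht0)
      (H.nonneg t ht0) (H.le_average t (r n) ht0 (hr0 n)) (hφfin t ht0)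
    have hrn : ENNReal.ofReal (r n)⁻¹ = ENNReal.ofReal (r n ^ 2)⁻¹ ^ (1 / 2 : ℝ) := by
      rw [ENNReal.ofReal_rpow_of_nonneg (by positivity) (by norm_num), ← Real.sqrt_eq_rpow,
        Real.sqrt_inv, Real.sqrt_sq (hr0 n).le]
    calc _ ≤ ENNReal.ofReal (r n)⁻¹ *
          ((A * (φ t - φ (t + r n ^ 2))) ^ (1 / 2 : ℝ) * (2 * K) ^ (1 / 2 : ℝ)) := by
            refine mul_le_mul' le_rfl (hosc.trans (mul_le_mul' le_rfl ?_))
            exact ENNReal.rpow_le_rpow (mul_le_mul' le_rfl (hKle t ht)) (by norm_num)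
      _ = ψ n t ^ (1 / 2 : ℝ) := by
            rw [hrn, ← ENNReal.mul_rpow_of_nonneg _ _ (by norm_num : (0 : ℝ) ≤ 1 / 2),
              ← ENNReal.mul_rpow_of_nonneg _ _ (by norm_num : (0 : ℝ) ≤ 1 / 2)]
            congr 1
            simp only [hψ]; ring
  have hψm : ∀ n, AEMeasurable (ψ n) (volume.restrict (Ioc a (2 * a))) := by
    intro n
    refine AEMeasurable.const_mul (AEMeasurable.sub ?_ ?_) _
    · exact aemeasurable_restrict_of_antitoneOn measurableSet_Ioc
        (hφanti.mono fun t ht => ha.trans ht.1)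
    · refine aemeasurable_restrict_of_antitoneOn measurableSet_Ioc fun s hs t ht hst => ?_
      have := sq_nonneg (r n)
      exact hφanti (show 0 < s + r n ^ 2 by linarith [hs.1])
        (show 0 < t + r n ^ 2 by linarith [ht.1]) (by linarith)
  have hψint : ∀ n, ∫⁻ t in Ioc a (2 * a), ψ n t ≤ A * (2 * K) * φ a := by
    intro n
    have hh : 0 < r n ^ 2 := by have := hr0 n; positivity
    have hcfin : A * (2 * K) * ENNReal.ofReal (r n ^ 2)⁻¹ ≠ ⊤ :=
      ENNReal.mul_ne_top (ENNReal.mul_ne_top ENNReal.ofReal_ne_top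
        (ENNReal.mul_ne_top (by norm_num) hKfin)) ENNReal.ofReal_ne_top
    simp only [hψ]
    rw [lintegral_const_mul' _ _ hcfin]
    calc _ ≤ A * (2 * K) * ENNReal.ofReal (r n ^ 2)⁻¹ * (ENNReal.ofReal (r n ^ 2) * φ a) :=
          mul_le_mul' le_rfl (lintegral_antitone_increment_le hφanti ha hh (hφfin a ha))
      _ = A * (2 * K) * φ a := by
          rw [mul_assoc, ← mul_assoc (ENNReal.ofReal (r n ^ 2)⁻¹), ← ENNReal.ofReal_mul
            (by positivity), inv_mul_cancel₀ hh.ne', ENNReal.ofReal_one, one_mul]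
  have hroot : ∀ n, ∫⁻ t in Ioc a (2 * a), ψ n t ^ (1 / 2 : ℝ) ≤
      (A * (2 * B)) ^ (1 / 2 : ℝ) * ENNReal.ofReal a ^ (1 / 2 : ℝ) * m ^ (1 - δ) := by
    intro n
    have h := ENNReal.lintegral_mul_norm_pow_le (hψm n)
      (aemeasurable_const (b := (1 : ENNReal))) (p := 1 / 2) (q := 1 / 2) (by norm_num)
      (by norm_num) (by norm_num)
    simp only [ENNReal.one_rpow, mul_one, setLIntegral_const, Real.volume_Ioc, one_mul,
      two_mul a, add_sub_cancel_right] at h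
    rw [← two_mul] at h
    refine h.trans ?_
    have h2 : ∫⁻ t in Ioc a (2 * a), ψ n t ≤ A * (2 * B) * m ^ (2 * (1 - δ)) := by
      calc _ ≤ A * (2 * K) * φ a := hψint n
        _ = A * 2 * (K * φ a) := by ring
        _ ≤ A * 2 * (B * m ^ (2 * (1 - δ))) := mul_le_mul' le_rfl hKφ
        _ = _ := by ring
    calc _ ≤ (A * (2 * B) * m ^ (2 * (1 - δ))) ^ (1 / 2 : ℝ) * ENNReal.ofReal a ^ (1 / 2 : ℝ) :=
          mul_le_mul' (ENNReal.rpow_le_rpow h2 (by norm_num)) le_rfl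
      _ = _ := by
          rw [ENNReal.mul_rpow_of_nonneg _ _ (by norm_num), ← ENNReal.rpow_mul,
            show 2 * (1 - δ) * (1 / 2) = 1 - δ by ring]
          ring
  have hmain : κ * ∫⁻ t in Ioc a (2 * a), ∫⁻ x,
      ENNReal.ofReal |fderiv ℝ (u t) x (EuclideanSpace.single j 1)| ≤
      (A * (2 * B)) ^ (1 / 2 : ℝ) * ENNReal.ofReal a ^ (1 / 2 : ℝ) * m ^ (1 - δ) := by
    rw [← lintegral_const_mul' _ _ hκt]
    refine (setLIntegral_mono' measurableSet_Ioc hpoint).trans ?_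
    refine (lintegral_liminf_le' fun n => (hψm n).pow_const _).trans ?_
    exact (Filter.liminf_le_liminf (Filter.Eventually.of_forall hroot)).trans
      (Filter.liminf_const _).le
  calc _ = κ⁻¹ * (κ * ∫⁻ t in Ioc a (2 * a), ∫⁻ x,
        ENNReal.ofReal |fderiv ℝ (u t) x (EuclideanSpace.single j 1)|) := by
        rw [← mul_assoc, ENNReal.inv_mul_cancel hκ hκt, one_mul]
    _ ≤ κ⁻¹ * ((A * (2 * B)) ^ (1 / 2 : ℝ) * ENNReal.ofReal a ^ (1 / 2 : ℝ) * m ^ (1 - δ)) :=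
        mul_le_mul' le_rfl hmain
    _ = _ := by ring

/-! ### Summation over dyadic blocks -/

/-- The averaging inequality comes from bounding the factor `T (t - s) x z` in the semigroup law
by the heat kernel. -/
lemma isSubHeatFlow_of_semigroup {d : ℕ}
    {T : ℝ → EuclideanSpace ℝ (Fin d) → EuclideanSpace ℝ (Fin d) → ℝ}
    (hdiff : ∀ t : ℝ, 0 < t → ∀ y, Differentiable ℝ (fun x => T t x y))
    (hbd : ∀ t : ℝ, 0 < t → ∀ x y, 0 ≤ T t x y ∧ T t x y ≤ heatKernel d t (x - y))
    (hsemi : ∀ s t : ℝ, 0 < s → s < t → ∀ x y,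
      T t x y = ∫ z : EuclideanSpace ℝ (Fin d), T (t - s) x z * T s z y)
    (y : EuclideanSpace ℝ (Fin d)) :
    IsSubHeatFlow d y (fun t x => T t x y) where
  differentiable t ht := hdiff t ht y
  nonneg t ht x := (hbd t ht x y).1
  le_heatKernel t ht x := (hbd t ht x y).2
  le_average t r ht hr x := by
    have hr2 : 0 < r ^ 2 := by positivity
    have hg : Measurable fun z => ENNReal.ofReal (T t z y) :=
      (hdiff t ht y).continuous.measurable.ennreal_ofReal
    rw [← lintegral_heatKernel_conv d hr x hg, hsemi t (t + r ^ 2) ht (by linarith) x y,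
      add_sub_cancel_left]
    -- The integral is bounded by the lower integral without any measurability in `z`.
    refine (Real.ofReal_le_enorm _).trans ((enorm_integral_le_lintegral_enorm _).trans ?_)
    refine lintegral_mono fun z => ?_
    obtain ⟨h0, h1⟩ := hbd (r ^ 2) hr2 x z
    rw [enorm_mul, Real.enorm_of_nonneg h0, Real.enorm_of_nonneg (hbd t ht z y).1]
    gcongr

lemma IsSubHeatFlow.mass_eq_integral {d : ℕ} {y : EuclideanSpace ℝ (Fin d)}
    {u : ℝ → EuclideanSpace ℝ (Fin d) → ℝ} (H : IsSubHeatFlow d y u) {t : ℝ} (ht : 0 < t) :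
    ∫⁻ x, ENNReal.ofReal (u t x) = ENNReal.ofReal (∫ x, u t x) := by
  refine (ofReal_integral_eq_lintegral_ofReal ⟨(H.measurable ht).aestronglyMeasurable, ?_⟩
    (ae_of_all _ (H.nonneg t ht))).symm
  rw [hasFiniteIntegral_iff_ofReal (ae_of_all _ (H.nonneg t ht))]
  exact (H.mass_le_one ht).trans_lt ENNReal.one_lt_top

lemma Ioi_subset_iUnion_dyadic {a : ℝ} (ha : 0 < a) :
    Ioi a ⊆ ⋃ n : ℕ, Ioc (2 ^ n * a) (2 * (2 ^ n * a)) := by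
  intro t ht
  have ht' : a < t := ht
  have hex : ∃ n : ℕ, t ≤ 2 * (2 ^ n * a) := by
    obtain ⟨n, hn⟩ := pow_unbounded_of_one_lt (t / a) (one_lt_two : (1 : ℝ) < 2)
    have h1 := (div_lt_iff₀ ha).1 hn
    have h2 : 0 < 2 ^ n * a := by positivity
    exact ⟨n, by linarith⟩
  classical
  refine mem_iUnion.2 ⟨Nat.find hex, ?_, Nat.find_spec hex⟩
  rcases h : Nat.find hex with _ | k
  · simpa using ht'
  · have := not_le.1 (Nat.find_min hex (m := k) (by omega))
    rw [pow_succ]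
    linarith

/-- The weighted gradient integral over `(a, ∞)`, summed over the dyadic blocks: the weight
`t ^ (-1 / 2)` exactly cancels the growth of `exists_dyadic_gradient_bound`. -/
lemma lintegral_weighted_gradient_le (d : ℕ) (j : Fin d) {θ : ℝ} {C : ENNReal}
    {u : ℝ → EuclideanSpace ℝ (Fin d) → ℝ}
    (hblock : ∀ a : ℝ, 0 < a → ∫⁻ t in Ioc a (2 * a), ∫⁻ x,
        ENNReal.ofReal |fderiv ℝ (u t) x (EuclideanSpace.single j 1)| ≤
      C * ENNReal.ofReal a ^ (1 / 2 : ℝ) * (∫⁻ x, ENNReal.ofReal (u a x)) ^ θ)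
    {a : ℝ} (ha : 0 < a) :
    ∫⁻ t in Ioi a, ∫⁻ x, ENNReal.ofReal
        (|fderiv ℝ (u t) x (EuclideanSpace.single j 1)| * t ^ (-(1 : ℝ) / 2)) ≤
      C * ∑' n : ℕ, (∫⁻ x, ENNReal.ofReal (u (2 ^ n * a) x)) ^ θ := by
  refine (lintegral_mono_set (Ioi_subset_iUnion_dyadic ha)).trans
    ((lintegral_iUnion_le _ _).trans ?_)
  rw [← ENNReal.tsum_mul_left]
  refine ENNReal.tsum_le_tsum fun n => ?_
  set b := 2 ^ n * a with hb
  have hb0 : 0 < b := by positivity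
  have hcancel : ENNReal.ofReal (b ^ (-(1 : ℝ) / 2)) * ENNReal.ofReal b ^ (1 / 2 : ℝ) = 1 := by
    rw [ENNReal.ofReal_rpow_of_pos hb0, ← ENNReal.ofReal_mul (by positivity),
      ← Real.rpow_add hb0]
    norm_num
  calc _ ≤ ∫⁻ t in Ioc b (2 * b), ENNReal.ofReal (b ^ (-(1 : ℝ) / 2)) *
        ∫⁻ x, ENNReal.ofReal |fderiv ℝ (u t) x (EuclideanSpace.single j 1)| := by
        refine setLIntegral_mono' measurableSet_Ioc fun t ht => ?_
        rw [← lintegral_const_mul' _ _ ENNReal.ofReal_ne_top]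
        refine lintegral_mono fun x => ?_
        rw [← ENNReal.ofReal_mul (by positivity), mul_comm]
        refine ENNReal.ofReal_le_ofReal (mul_le_mul_of_nonneg_right ?_ (abs_nonneg _))
        exact Real.rpow_le_rpow_of_nonpos hb0 ht.1.le (by norm_num)
    _ ≤ ENNReal.ofReal (b ^ (-(1 : ℝ) / 2)) * (C * ENNReal.ofReal b ^ (1 / 2 : ℝ) *
        (∫⁻ x, ENNReal.ofReal (u b x)) ^ θ) := by
        rw [lintegral_const_mul' _ _ ENNReal.ofReal_ne_top]
        exact mul_le_mul' le_rfl (hblock b hb0)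
    _ = (ENNReal.ofReal (b ^ (-(1 : ℝ) / 2)) * ENNReal.ofReal b ^ (1 / 2 : ℝ)) *
        (C * (∫⁻ x, ENNReal.ofReal (u b x)) ^ θ) := by ring
    _ = _ := by rw [hcancel, one_mul]

theorem gradient_large_time_estimate (d : ℕ) (hd : 1 ≤ d)
    (C₁ C₀ ε : ℝ) (hC₁ : 0 < C₁) (hC₀ : 0 < C₀) (hε : 0 < ε) :
    ∃ C : ℝ, 0 < C ∧
      ∀ (T : ℝ → EuclideanSpace ℝ (Fin d) → EuclideanSpace ℝ (Fin d) → ℝ)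
        (S : Set (EuclideanSpace ℝ (Fin d))) (ℓ : ℝ), 0 < ℓ →
        (∀ y (j : Fin d), Measurable (fun p : ℝ × EuclideanSpace ℝ (Fin d) =>
          fderiv ℝ (fun x => T p.1 x y) p.2 (EuclideanSpace.single j 1))) →
        (∀ (t : ℝ), 0 < t → ∀ y, Differentiable ℝ (fun x => T t x y)) →
        (∀ (t : ℝ), 0 < t → ∀ x y, 0 ≤ T t x y ∧ T t x y ≤ heatKernel d t (x - y)) →
        (∀ (t : ℝ), 0 < t → ∀ z (j : Fin d),
          (∫ x : EuclideanSpace ℝ (Fin d),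
            |fderiv ℝ (fun x' => T t x' z) x (EuclideanSpace.single j 1)|)
            ≤ C₁ * t ^ (-(1 : ℝ) / 2)) →
        (∀ s t : ℝ, 0 < s → s < t → ∀ x y,
          T t x y = ∫ z : EuclideanSpace ℝ (Fin d), T (t - s) x z * T s z y) →
        (∀ n : ℕ, 1 ≤ n → ∀ y ∈ S,
          (∫ x : EuclideanSpace ℝ (Fin d), T (2 ^ n * ℓ ^ 2) x y)
            ≤ C₀ * (n : ℝ) ^ (-(1 : ℝ) - ε)) →
        ∀ (j : Fin d), ∀ y ∈ S,
          (∫ x : EuclideanSpace ℝ (Fin d), ∫ t in Ioi (ℓ ^ 2),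
            |fderiv ℝ (fun x' => T t x' y) x (EuclideanSpace.single j 1)| *
              t ^ (-(1 : ℝ) / 2)) ≤ C := by
  -- `δ` is chosen so that `(1 + ε) * (1 - δ) = 1 + ε / 2`, which still exceeds `1`.
  set δ := ε / (2 * (1 + ε)) with hδdef
  have hδ : 0 < δ := by positivity
  have hδ2 : δ < 1 / 2 := by
    rw [hδdef, div_lt_div_iff₀ (by positivity) (by norm_num)]; linarith
  have hexp : (-(1 : ℝ) - ε) * (1 - δ) = -(1 + ε / 2) := by
    rw [hδdef]; field_simp; ring
  choose K hKfin hK using fun j : Fin d => exists_dyadic_gradient_bound d j hδ hδ2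
  -- The bound for block `n`; in block `0` the condition on the masses says nothing and only
  -- `mass ≤ 1` is used.
  set w : ℕ → ℝ := fun n =>
    (if n = 0 then 1 else 0) + C₀ ^ (1 - δ) * (n : ℝ) ^ (-(1 + ε / 2)) with hw
  have hwsum : Summable w := by
    refine Summable.add (summable_of_ne_finset_zero (s := {0}) fun n hn => ?_)
      ((Real.summable_nat_rpow.2 (by linarith)).mul_left _)
    simp at hn; simp [hn]
  set M : ENNReal := (∑ j, K j) * ∑' n, ENNReal.ofReal (w n) with hM
  have hMfin : M ≠ ⊤ := ENNReal.mul_ne_top (ENNReal.sum_ne_top.2 fun j _ => hKfin j)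
    hwsum.tsum_ofReal_ne_top
  refine ⟨M.toReal + 1, by positivity, ?_⟩
  intro T S ℓ hℓ hmeas hdiff hbd _ hsemi hD j y hy
  have hℓ2 : 0 < ℓ ^ 2 := by positivity
  have H := isSubHeatFlow_of_semigroup hdiff hbd hsemi y
  have hmass : ∀ n : ℕ, (∫⁻ x, ENNReal.ofReal (T (2 ^ n * ℓ ^ 2) x y)) ^ (1 - δ) ≤
      ENNReal.ofReal (w n) := by
    intro n
    have hpos : 0 < (2 : ℝ) ^ n * ℓ ^ 2 := by positivity
    rcases Nat.eq_zero_or_pos n with rfl | hn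
    · refine (ENNReal.rpow_le_one (H.mass_le_one hpos) (by linarith)).trans ?_
      rw [ENNReal.one_le_ofReal]
      simp only [hw, if_true]
      have : 0 ≤ C₀ ^ (1 - δ) * ((0 : ℕ) : ℝ) ^ (-(1 + ε / 2)) := by positivity
      linarith
    · have h1 : ∫⁻ x, ENNReal.ofReal (T (2 ^ n * ℓ ^ 2) x y) ≤
          ENNReal.ofReal (C₀ * (n : ℝ) ^ (-(1 : ℝ) - ε)) := by
        rw [H.mass_eq_integral hpos]
        exact ENNReal.ofReal_le_ofReal (hD n hn y hy)
      refine (ENNReal.rpow_le_rpow h1 (by linarith)).trans (le_of_eq ?_)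
      rw [ENNReal.ofReal_rpow_of_nonneg (by positivity) (by linarith),
        Real.mul_rpow hC₀.le (by positivity), ← Real.rpow_mul (by positivity), hexp]
      simp [hw, hn.ne']
  have hle : ∫⁻ t in Ioi (ℓ ^ 2), ∫⁻ x, ENNReal.ofReal
      (|fderiv ℝ (fun x' => T t x' y) x (EuclideanSpace.single j 1)| * t ^ (-(1 : ℝ) / 2)) ≤
      M := by
    refine (lintegral_weighted_gradient_le d j (hK j y _ H) hℓ2).trans ?_
    exact mul_le_mul' (Finset.single_le_sum (f := K) (fun _ _ => zero_le) (Finset.mem_univ j))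
      (ENNReal.tsum_le_tsum hmass)
  have hGm : Measurable fun p : EuclideanSpace ℝ (Fin d) × ℝ => ENNReal.ofReal
      (|fderiv ℝ (fun x' => T p.2 x' y) p.1 (EuclideanSpace.single j 1)| *
        p.2 ^ (-(1 : ℝ) / 2)) := by
    have h1 := (hmeas y j).comp measurable_swap
    exact ((measurable_abs.comp h1).mul (by fun_prop)).ennreal_ofReal
  rw [← lintegral_lintegral_swap hGm.aemeasurable] at hle
  have henorm : ENNReal.ofReal (∫ x : EuclideanSpace ℝ (Fin d), ∫ t in Ioi (ℓ ^ 2),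
      |fderiv ℝ (fun x' => T t x' y) x (EuclideanSpace.single j 1)| * t ^ (-(1 : ℝ) / 2)) ≤ M := by
    refine (Real.ofReal_le_enorm _).trans ((enorm_integral_le_lintegral_enorm _).trans
      (le_trans (lintegral_mono fun x => ?_) hle))
    refine (enorm_integral_le_lintegral_enorm _).trans
      (setLIntegral_mono' measurableSet_Ioi fun t ht => ?_)
    have ht0 : 0 < t := hℓ2.trans ht
    rw [Real.enorm_of_nonneg (by positivity)]
  have := (ENNReal.ofReal_le_iff_le_toReal hMfin).1 henorm
  linarith
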